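/- Let 0<α<1 and let s be a complex number with Re s > 0. Then ∫₀^∞ (e^{−sy} − 1) y^{−1−α} dy = Γ(−α) s^α, where s^α is the principal-branch power and Γ(−α) = −Γ(1−α)/α. -/

import Mathlib

open MeasureTheory

noncomputable section

/-!
The integral is the Mellin transform of `e^{-sy} - 1` at `-α`. The Mellin transform of `e^{-sy}` at
`a`, for `0 < Re a`, is `Γ(a) s^{-a}`: both sides are holomorphic in `s` on the right half plane and
agree for real `s`. Since `e^{-sy} - 1` is `O(y)` at `0` and `O(1)` at infinity, its Mellin
transform converges in the strip `-1 < Re a < 0`, and integrating by parts turns it into the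
transform of its derivative `-s e^{-sy}` at `a + 1`. The functional equation of `Γ` then shows that
the same formula `Γ(a) s^{-a}` holds in that strip.
-/

open Asymptotics Complex Filter Set
open scoped Topology

lemma norm_cexp_neg_mul_ofReal (s : ℂ) (t : ℝ) : ‖cexp (-(s * t))‖ = Real.exp (-(s.re * t)) := by
  simp [norm_exp]

lemma hasDerivAt_cexp_neg_mul_ofReal (s : ℂ) (t : ℝ) :
    HasDerivAt (fun t : ℝ ↦ cexp (-(s * t))) (-s * cexp (-(s * t))) t := by
  simpa [mul_comm] using ((hasDerivAt_id t).ofReal_comp.const_mul s).fun_neg.cexp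

lemma mul_exp_neg_mul_le {δ : ℝ} (hδ : 0 < δ) (σ t : ℝ) :
    t * Real.exp (-(σ * t)) ≤ δ⁻¹ * Real.exp (-((σ - δ) * t)) := by
  have h_linear : δ * t ≤ Real.exp (δ * t) := by linarith [Real.add_one_le_exp (δ * t)]
  calc t * Real.exp (-(σ * t)) = δ⁻¹ * (δ * t * Real.exp (-(σ * t))) := by field_simp
    _ ≤ δ⁻¹ * (Real.exp (δ * t) * Real.exp (-(σ * t))) := by gcongr
    _ = δ⁻¹ * Real.exp (-((σ - δ) * t)) := by rw [← Real.exp_add]; ring_nf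

section VectorValued

variable {E : Type*} [NormedAddCommGroup E] [NormedSpace ℂ E]

lemma eqOn_of_frequently_eq_ofReal {f g : ℂ → E} {U : Set ℂ} (hf : AnalyticOnNhd ℂ f U)
    (hg : AnalyticOnNhd ℂ g U) (hU : IsPreconnected U) {x : ℝ} (hx : (x : ℂ) ∈ U)
    (hfg : ∃ᶠ r : ℝ in 𝓝[≠] x, f r = g r) : EqOn f g U := by
  have h_tendsto : Tendsto ((↑) : ℝ → ℂ) (𝓝[≠] x) (𝓝[≠] (x : ℂ)) :=
    continuous_ofReal.continuousWithinAt.tendsto_nhdsWithin fun r hr ↦ by simpa using hr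
  exact hf.eqOn_of_preconnected_of_frequently_eq hg hU hx (h_tendsto.frequently hfg)

lemma differentiableOn_integral_cexp_neg_mul_smul {f : ℝ → E} {c : ℝ}
    (hf : ∀ s : ℂ, c < s.re → IntegrableOn (fun t : ℝ ↦ cexp (-(s * t)) • f t) (Ioi 0)) :
    DifferentiableOn ℂ (fun s : ℂ ↦ ∫ t in Ioi (0 : ℝ), cexp (-(s * t)) • f t)
      {s | c < s.re} := by
  intro s hs
  obtain ⟨σ, hcσ, hσs⟩ := exists_between (show c < s.re from hs)
  obtain ⟨τ, hστ, hτs⟩ := exists_between hσs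
  have hU : {x : ℂ | τ < x.re} ∈ 𝓝 s :=
    (isOpen_lt continuous_const continuous_re).mem_nhds hτs
  have hcx {x : ℂ} (hx : τ < x.re) : c < x.re := by linarith
  have h_meas : AEStronglyMeasurable (fun t : ℝ ↦ (-t * cexp (-(s * t))) • f t)
      (volume.restrict (Ioi 0)) := by
    simp only [mul_smul]
    exact AEStronglyMeasurable.smul (by fun_prop) (hf s hs).aestronglyMeasurable
  -- Lowering the rate of decay from `τ` to `σ` absorbs the factor `t` of the derivative.
  have h_bound : ∀ t ∈ Ioi (0 : ℝ), ∀ x ∈ {x : ℂ | τ < x.re},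
      ‖(-t * cexp (-(x * t))) • f t‖ ≤ (τ - σ)⁻¹ * ‖cexp (-((σ : ℂ) * t)) • f t‖ := by
    intro t (ht : 0 < t) x (hx : τ < x.re)
    simp only [norm_smul, norm_mul, norm_neg, norm_cexp_neg_mul_ofReal, ofReal_re,
      Complex.norm_of_nonneg ht.le, ← mul_assoc]
    refine mul_le_mul_of_nonneg_right ?_ (norm_nonneg _)
    calc t * Real.exp (-(x.re * t)) ≤ t * Real.exp (-(τ * t)) := by gcongr
      _ ≤ (τ - σ)⁻¹ * Real.exp (-(σ * t)) := by
        simpa using mul_exp_neg_mul_le (sub_pos.2 hστ) τ t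
  have h_deriv (t : ℝ) (x : ℂ) :
      HasDerivAt (fun x : ℂ ↦ cexp (-(x * t)) • f t) ((-t * cexp (-(x * t))) • f t) x := by
    refine HasDerivAt.smul_const ?_ (f t)
    simpa [mul_comm] using ((hasDerivAt_id x).mul_const (t : ℂ)).fun_neg.cexp
  exact (hasDerivAt_integral_of_dominated_loc_of_deriv_le hU
    (eventually_of_mem hU fun x hx ↦ (hf x (hcx hx)).aestronglyMeasurable) (hf s hs) h_meas
    (ae_restrict_of_forall_mem measurableSet_Ioi h_bound)
    ((hf σ hcσ).norm.const_mul _)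
    (.of_forall fun t x _ ↦ h_deriv t x)).2.differentiableAt.differentiableWithinAt

end VectorValued

lemma tendsto_cpow_mul_nhds_zero_of_isBigO {f : ℝ → ℂ} {a : ℂ} {p : ℝ} {l : Filter ℝ}
    (hl : ∀ᶠ t in l, 0 < t) (hf : f =O[l] (· ^ (-p)))
    (hlim : Tendsto (fun t : ℝ ↦ t ^ (a.re - p)) l (𝓝 0)) :
    Tendsto (fun t : ℝ ↦ (t : ℂ) ^ a * f t) l (𝓝 0) := by
  have h_cpow : (fun t : ℝ ↦ (t : ℂ) ^ a) =O[l] fun t ↦ t ^ a.re :=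
    .of_norm_eventuallyLE <| hl.mono fun t ht ↦ (norm_cpow_eq_rpow_re_of_pos ht a).le
  refine (h_cpow.mul hf).trans_tendsto (hlim.congr' ?_)
  filter_upwards [hl] with t ht
  rw [sub_eq_add_neg, Real.rpow_add ht]

lemma mellin_deriv {f f' : ℝ → ℂ} {a : ℂ} {p q : ℝ}
    (hf : ∀ t ∈ Ioi (0 : ℝ), HasDerivAt f (f' t) t) (hf' : MellinConvergent f' (a + 1))
    (hf_top : f =O[atTop] (· ^ (-p))) (hp : a.re < p)
    (hf_bot : f =O[𝓝[>] 0] (· ^ (-q))) (hq : q < a.re) :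
    mellin f' (a + 1) = -a * mellin f a := by
  have hf_conv : MellinConvergent f a :=
    mellinConvergent_of_isBigO_rpow
      ((HasDerivAt.continuousOn hf).locallyIntegrableOn measurableSet_Ioi) hf_top hp hf_bot hq
  have h_cpow : ∀ t ∈ Ioi (0 : ℝ),
      HasDerivAt (fun t : ℝ ↦ (t : ℂ) ^ a) (a * (t : ℂ) ^ (a - 1)) t := fun t ht ↦
    (hasStrictDerivAt_cpow_const (ofReal_mem_slitPlane.2 ht)).hasDerivAt.comp_ofReal
  have h_bot : Tendsto (fun t : ℝ ↦ (t : ℂ) ^ a * f t) (𝓝[>] 0) (𝓝 0) :=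
    tendsto_cpow_mul_nhds_zero_of_isBigO self_mem_nhdsWithin hf_bot <|
      ((Real.continuous_rpow_const (sub_pos.2 hq).le).tendsto' 0 0
        (Real.zero_rpow (sub_pos.2 hq).ne')).mono_left nhdsWithin_le_nhds
  have h_top : Tendsto (fun t : ℝ ↦ (t : ℂ) ^ a * f t) atTop (𝓝 0) :=
    tendsto_cpow_mul_nhds_zero_of_isBigO (eventually_gt_atTop 0) hf_top <| by
      simpa using tendsto_rpow_neg_atTop (sub_pos.2 hp)
  have h_int' : IntegrableOn (fun t : ℝ ↦ (t : ℂ) ^ a * f' t) (Ioi 0) := by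
    simpa [MellinConvergent] using hf'
  have h_int : IntegrableOn (fun t : ℝ ↦ a * (t : ℂ) ^ (a - 1) * f t) (Ioi 0) := by
    simpa only [mul_assoc] using! Integrable.const_mul hf_conv a
  calc mellin f' (a + 1) = ∫ t in Ioi (0 : ℝ), (t : ℂ) ^ a * f' t := by simp [mellin]
    _ = 0 - 0 - ∫ t in Ioi (0 : ℝ), a * (t : ℂ) ^ (a - 1) * f t :=
      integral_Ioi_mul_deriv_eq_deriv_mul h_cpow hf h_int' h_int h_bot h_top
    _ = -a * mellin f a := by
      simp only [mellin, smul_eq_mul, mul_assoc, integral_const_mul]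
      ring

section MellinExp

variable {a s : ℂ}

lemma mellinConvergent_cexp_neg_mul (ha : 0 < a.re) (hs : 0 < s.re) :
    MellinConvergent (fun t : ℝ ↦ cexp (-(s * t))) a := by
  have h_cont : Continuous fun t : ℝ ↦ cexp (-(s * t)) := by fun_prop
  have h_top : (fun t : ℝ ↦ cexp (-(s * t))) =O[atTop] fun t ↦ Real.exp (-s.re * t) :=
    .of_norm_le fun t ↦ by rw [norm_cexp_neg_mul_ofReal, neg_mul]
  have h_bot : (fun t : ℝ ↦ cexp (-(s * t))) =O[𝓝[>] 0] (· ^ (-0 : ℝ)) := by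
    simpa using (h_cont.tendsto 0).isBigO_one ℝ |>.mono nhdsWithin_le_nhds
  exact mellinConvergent_of_isBigO_rpow_exp hs (h_cont.locallyIntegrable.locallyIntegrableOn _)
    h_top h_bot ha

lemma mellin_cexp_neg_mul_ofReal (ha : 0 < a.re) {r : ℝ} (hr : 0 < r) :
    mellin (fun t : ℝ ↦ cexp (-(r * t))) a = Gamma a * (r : ℂ) ^ (-a) := by
  have h_arg : (r : ℂ).arg ≠ Real.pi := by simp [arg_ofReal_of_nonneg hr.le, Real.pi_ne_zero.symm]
  simp only [mellin, smul_eq_mul]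
  rw [integral_cpow_mul_exp_neg_mul_Ioi ha hr, one_div, inv_cpow _ _ h_arg, ← cpow_neg, mul_comm]

lemma mellin_cexp_neg_mul (ha : 0 < a.re) (hs : 0 < s.re) :
    mellin (fun t : ℝ ↦ cexp (-(s * t))) a = Gamma a * s ^ (-a) := by
  have h_open : IsOpen {s : ℂ | 0 < s.re} := isOpen_lt continuous_const continuous_re
  have h_mellin : DifferentiableOn ℂ (fun s : ℂ ↦ mellin (fun t : ℝ ↦ cexp (-(s * t))) a)
      {s | 0 < s.re} := by
    have h_conv (s : ℂ) (hs : 0 < s.re) := mellinConvergent_cexp_neg_mul ha hs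
    simp only [mellin, MellinConvergent, smul_eq_mul, mul_comm _ (cexp _)] at h_conv ⊢
    exact differentiableOn_integral_cexp_neg_mul_smul h_conv
  have h_cpow : DifferentiableOn ℂ (fun s : ℂ ↦ Gamma a * s ^ (-a)) {s | 0 < s.re} := fun s hs ↦
    ((differentiableAt_id.cpow_const (Or.inl hs)).const_mul _).differentiableWithinAt
  refine eqOn_of_frequently_eq_ofReal (x := 1) (h_mellin.analyticOnNhd h_open)
    (h_cpow.analyticOnNhd h_open) (convex_halfSpace_re_gt 0).isPreconnected (by simp)
    (Eventually.frequently ?_) hs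
  filter_upwards [nhdsWithin_le_nhds (lt_mem_nhds one_pos)] with r hr
  exact mellin_cexp_neg_mul_ofReal ha hr

lemma isBigO_cexp_neg_mul_sub_one_atTop (hs : 0 ≤ s.re) :
    (fun t : ℝ ↦ cexp (-(s * t)) - 1) =O[atTop] (1 : ℝ → ℝ) := by
  refine .sub (.of_norm_eventuallyLE ?_) (isBigO_const_const 1 one_ne_zero _)
  filter_upwards [eventually_ge_atTop 0] with t ht
  simpa [norm_cexp_neg_mul_ofReal] using mul_nonneg hs ht

lemma isBigO_cexp_neg_mul_sub_one_zero (s : ℂ) :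
    (fun t : ℝ ↦ cexp (-(s * t)) - 1) =O[𝓝 0] (id : ℝ → ℝ) := by
  simpa using! (hasDerivAt_cexp_neg_mul_ofReal s 0).isBigO_sub

lemma mellin_cexp_neg_mul_sub_one (ha : -1 < a.re) (ha' : a.re < 0) (hs : 0 < s.re) :
    mellin (fun t : ℝ ↦ cexp (-(s * t)) - 1) a = Gamma a * s ^ (-a) := by
  have ha0 : a ≠ 0 := fun h ↦ by simp [h] at ha'
  have ha1 : 0 < (a + 1).re := by simpa [← neg_lt_iff_pos_add] using ha
  have hs0 : s ≠ 0 := ne_zero_of_re_pos hs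
  have h_deriv : ∀ t ∈ Ioi (0 : ℝ),
      HasDerivAt (fun t : ℝ ↦ cexp (-(s * t)) - 1) (-s * cexp (-(s * t))) t := fun t _ ↦
    (hasDerivAt_cexp_neg_mul_ofReal s t).sub_const 1
  have h_parts : mellin (fun t : ℝ ↦ -s * cexp (-(s * t))) (a + 1)
      = -a * mellin (fun t : ℝ ↦ cexp (-(s * t)) - 1) a :=
    mellin_deriv (p := 0) (q := -1) h_deriv ((mellinConvergent_cexp_neg_mul ha1 hs).const_smul (-s))
      (by simpa only [neg_zero, Real.rpow_zero] using! isBigO_cexp_neg_mul_sub_one_atTop hs.le) ha'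
      (by simpa using! (isBigO_cexp_neg_mul_sub_one_zero s).mono nhdsWithin_le_nhds) ha
  have h_exp : mellin (fun t : ℝ ↦ -s * cexp (-(s * t))) (a + 1)
      = -a * (Gamma a * s ^ (-a)) := by
    calc mellin (fun t : ℝ ↦ -s * cexp (-(s * t))) (a + 1)
        = -s * mellin (fun t : ℝ ↦ cexp (-(s * t))) (a + 1) := mellin_const_smul _ _ (-s)
      _ = -s * (a * Gamma a * (s ^ (-a) / s)) := by
        rw [mellin_cexp_neg_mul ha1 hs, Gamma_add_one a ha0, neg_add', cpow_sub _ _ hs0, cpow_one]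
      _ = -a * (Gamma a * s ^ (-a)) := by field_simp
  exact mul_left_cancel₀ (neg_ne_zero.2 ha0) (h_parts.symm.trans h_exp)

end MellinExp

theorem stmt10_general {a s : ℂ} (ha : 0 < a.re) (ha' : a.re < 1) (hs : 0 < s.re) :
    ∫ y in Ioi (0 : ℝ), (cexp (-(s * y)) - 1) / (y : ℂ) ^ (1 + a) = Gamma (-a) * s ^ a := by
  have h_mellin := mellin_cexp_neg_mul_sub_one (a := -a) (by simpa using ha') (by simpa using ha) hs
  rw [neg_neg, mellin] at h_mellin
  rw [← h_mellin]
  refine setIntegral_congr_fun measurableSet_Ioi fun y _ ↦ ?_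
  rw [smul_eq_mul, ← neg_add', add_comm a, cpow_neg, div_eq_inv_mul]

/-- for `0 < α < 1` and `s ∈ ℂ` with `Re s > 0`,
`∫₀^∞ (e^{−sy} − 1) y^{−1−α} dy = Γ(−α) s^α`, with the principal-branch power `s^α`
and `Γ(−α) = −Γ(1−α)/α` (Mathlib's `Real.Gamma` at `−α`). -/
theorem stmt10 (α : ℝ) (hα0 : 0 < α) (hα1 : α < 1) (s : ℂ) (hs : 0 < s.re) :
    ∫ y in Set.Ioi (0 : ℝ), (Complex.exp (-(s * (y : ℂ))) - 1) / ((y ^ (1 + α) : ℝ) : ℂ)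
      = (Real.Gamma (-α) : ℂ) * s ^ (α : ℂ) := by
  rw [← Gamma_ofReal, ofReal_neg, ← stmt10_general (a := α) hα0 hα1 hs]
  exact setIntegral_congr_fun measurableSet_Ioi fun y hy ↦ by simp [ofReal_cpow (le_of_lt hy)]
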